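/- Let A = {A_i}_{1 ≤ i ≤ n+1} be a polygon in ℝ^N with side lengths ℓ_i. Then λ_1^A equals the minimum of Q(α, β)/(∑_{i=1}^n α_i²) over all (α, β) ∈ E with (α, β) ≠ 0 and ∑_{i=1}^n α_i = 0; that is, the variational first eigenvalue λ_1^A coincides with the first nonzero eigenvalue of the finite-dimensional quadratic form Q on E. -/

import Mathlib

open MeasureTheory
open scoped RealInnerProductSpace ENNReal NNReal

noncomputable section

/-- The length of the `i`-th side of the polygon with vertices `A` (indices cyclic). -/
def polyLen {N n : ℕ} (A : ZMod n → EuclideanSpace ℝ (Fin N)) (i : ZMod n) : ℝ :=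
  ‖A (i + 1) - A i‖

/-- The unit tangent vector of the `i`-th side of the polygon with vertices `A`. -/
def polyTau {N n : ℕ} (A : ZMod n → EuclideanSpace ℝ (Fin N)) (i : ZMod n) :
    EuclideanSpace ℝ (Fin N) :=
  ‖A (i + 1) - A i‖⁻¹ • (A (i + 1) - A i)

/-- The curvature vector of the polygon with vertices `A` at the vertex `A i`. -/
def polyH {N n : ℕ} (A : ZMod n → EuclideanSpace ℝ (Fin N)) (i : ZMod n) :
    EuclideanSpace ℝ (Fin N) :=
  ‖A i - A (i - 1)‖⁻¹ • (A i - A (i - 1)) + ‖A i - A (i + 1)‖⁻¹ • (A i - A (i + 1))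

/-- `A` (a cyclic list of vertices) is a polygon: there are at least 3 vertices, consecutive
vertices are distinct, open sides do not meet each other, and a vertex belongs only to its
two consecutive (closed) sides. -/
def IsPolygon {N n : ℕ} [NeZero n] (A : ZMod n → EuclideanSpace ℝ (Fin N)) : Prop :=
  3 ≤ n ∧
  (∀ i, A (i + 1) ≠ A i) ∧
  (∀ i j : ZMod n, i ≠ j →
    openSegment ℝ (A i) (A (i + 1)) ∩ openSegment ℝ (A j) (A (j + 1)) = ∅) ∧
  (∀ i j : ZMod n, A i ∈ segment ℝ (A j) (A (j + 1)) → j = i ∨ j = i - 1)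

/-- The first nonzero "eigenvalue" `λ₁ᴬ` of the polygon with vertices `A`, defined as the
infimum of the Rayleigh quotients
`(∑ i, ∫_{[Aᵢ, Aᵢ₊₁]} |∇_P u|² dℋ¹) / (∑ i, u (Aᵢ)²)` over smooth functions `u : ℝᴺ → ℝ`
with `∑ i, u (Aᵢ) = 0` and `∑ i, u (Aᵢ)² ≠ 0`, where `∇_P u (x) = ⟪∇u(x), τᵢ⟫ τᵢ` is the
tangential gradient of `u` along the side `[Aᵢ, Aᵢ₊₁]`. -/
def polyLambda1 {N n : ℕ} [NeZero n] (A : ZMod n → EuclideanSpace ℝ (Fin N)) : ℝ :=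
  sInf { r : ℝ | ∃ u : EuclideanSpace ℝ (Fin N) → ℝ, ContDiff ℝ (⊤ : ℕ∞) u ∧
    (∑ i, u (A i)) = 0 ∧ (∑ i, u (A i) ^ 2) ≠ 0 ∧
    r = (∑ i, ∫ x in segment ℝ (A i) (A (i + 1)),
          ‖(fderiv ℝ u x (polyTau A i)) • polyTau A i‖ ^ 2 ∂(μH[1])) /
        (∑ i, u (A i) ^ 2) }

/-!
Along a side of length `ℓ` a smooth function `u` has energy `ℓ⁻¹ ∫₀¹ g'²`, where `g` is `u` read
in the affine parameter of the side. Jensen's inequality bounds this below by `(g 1 - g 0)² / ℓ`,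
so the quotient of `u` is at least the discrete quotient of its vertex values. Affine
interpolation of given vertex values would attain equality, but it has corners at the vertices;
composing it with a step function that is constant near `0` and near `1` and has energy at most
`C > 1` makes the side profiles constant near the vertices, where they glue to a smooth function
on the whole space, and costs only the factor `C`.
-/

open Filter Metric Set
open scoped ContDiff Manifold Topology

section SegmentEnergy

variable {E : Type*} [NormedAddCommGroup E] [NormedSpace ℝ E]

lemma isClosed_segment (a b : E) : IsClosed (segment ℝ a b) := by
  rw [segment_eq_image_lineMap]
  exact (isCompact_Icc.image AffineMap.lineMap_continuous).isClosed

lemma deriv_comp_lineMap {u : E → ℝ} (hu : Differentiable ℝ u) (a b : E) (s : ℝ) :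
    deriv (fun t : ℝ ↦ u (AffineMap.lineMap a b t)) s =
      fderiv ℝ u (AffineMap.lineMap a b s) (b - a) :=
  ((hu _).hasFDerivAt.comp_hasDerivAt s AffineMap.hasDerivAt_lineMap).deriv

lemma sq_sub_le_integral_deriv_sq {g : ℝ → ℝ} (hg : ContDiff ℝ 1 g) :
    (g 1 - g 0) ^ 2 ≤ ∫ s in (0 : ℝ)..1, deriv g s ^ 2 := by
  have hg' : Continuous (deriv g) := hg.continuous_deriv le_rfl
  have : IsProbabilityMeasure (volume.restrict (Ioc (0 : ℝ) 1)) := ⟨by simp⟩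
  rw [← intervalIntegral.integral_deriv_eq_sub
      (fun s _ ↦ (hg.differentiable one_ne_zero) s) (hg'.intervalIntegrable _ _),
    intervalIntegral.integral_of_le zero_le_one, intervalIntegral.integral_of_le zero_le_one]
  exact even_two.convexOn_pow.map_integral_le (continuous_pow 2).continuousOn isClosed_univ
    (by simp) hg'.integrableOn_Ioc (hg'.pow 2).integrableOn_Ioc

variable [MeasurableSpace E] [BorelSpace E]

lemma hausdorffMeasure_restrict_segment (a b : E) :
    (μH[1] : Measure E).restrict (segment ℝ a b) =
      nndist a b • (volume.restrict (Icc (0 : ℝ) 1)).map (AffineMap.lineMap a b) := by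
  have hmeas : Measurable (AffineMap.lineMap a b : ℝ → E) :=
    AffineMap.lineMap_continuous.measurable
  ext s hs
  rw [Measure.restrict_apply hs, Measure.smul_apply, Measure.map_apply hmeas hs,
    Measure.restrict_apply (hmeas hs), segment_eq_image_lineMap, inter_comm,
    ← image_inter_preimage, hausdorffMeasure_lineMap_image, hausdorffMeasure_real, inter_comm]

lemma setIntegral_segment_hausdorffMeasure {f : E → ℝ} (hf : Continuous f) (a b : E) :
    ∫ x in segment ℝ a b, f x ∂μH[1] =
      ‖b - a‖ * ∫ s in (0 : ℝ)..1, f (AffineMap.lineMap a b s) := by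
  rw [hausdorffMeasure_restrict_segment, integral_smul_nnreal_measure,
    integral_map AffineMap.lineMap_continuous.aemeasurable (by fun_prop),
    intervalIntegral.integral_of_le zero_le_one, integral_Icc_eq_integral_Ioc,
    NNReal.smul_def, smul_eq_mul, coe_nndist, dist_eq_norm, norm_sub_rev]

/-- The tangential Dirichlet energy `∫_{[a, b]} |∇_P u|² dℋ¹` of `u` along the segment `[a, b]`,
written with the normalized direction `(b - a) / |b - a|` so that the summands of `polyLambda1`
are instances of it by definition. -/
def segmentEnergy (a b : E) (u : E → ℝ) : ℝ :=
  ∫ x in segment ℝ a b,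
    ‖(fderiv ℝ u x (‖b - a‖⁻¹ • (b - a))) • (‖b - a‖⁻¹ • (b - a))‖ ^ 2 ∂μH[1]

variable {a b : E} {u : E → ℝ}

lemma segmentEnergy_eq_integral_deriv_sq (hab : a ≠ b) (hu : ContDiff ℝ 1 u) :
    segmentEnergy a b u =
      (∫ s in (0 : ℝ)..1, deriv (fun t : ℝ ↦ u (AffineMap.lineMap a b t)) s ^ 2) / ‖b - a‖ := by
  have hlen : ‖b - a‖ ≠ 0 := norm_ne_zero_iff.2 (sub_ne_zero.2 hab.symm)
  have hunit : ‖‖b - a‖⁻¹ • (b - a)‖ = 1 := by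
    rw [norm_smul, norm_inv, norm_norm, inv_mul_cancel₀ hlen]
  have : Continuous (fderiv ℝ u) := hu.continuous_fderiv one_ne_zero
  rw [segmentEnergy, setIntegral_segment_hausdorffMeasure (by fun_prop)]
  simp_rw [deriv_comp_lineMap (hu.differentiable one_ne_zero), norm_smul _ (‖b - a‖⁻¹ • (b - a)),
    hunit, mul_one, map_smul, smul_eq_mul, Real.norm_eq_abs, sq_abs, mul_pow]
  rw [intervalIntegral.integral_const_mul]
  field_simp

lemma sq_sub_div_norm_le_segmentEnergy (hab : a ≠ b) (hu : ContDiff ℝ 1 u) :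
    (u b - u a) ^ 2 / ‖b - a‖ ≤ segmentEnergy a b u := by
  rw [segmentEnergy_eq_integral_deriv_sq hab hu]
  gcongr
  have hline : ContDiff ℝ 1 fun t : ℝ ↦ u (AffineMap.lineMap a b t) :=
    hu.comp (contDiff_const.lineMap contDiff_const contDiff_id)
  simpa only [AffineMap.lineMap_apply_one, AffineMap.lineMap_apply_zero] using
    sq_sub_le_integral_deriv_sq hline

lemma segmentEnergy_eq_of_eqOn {g : ℝ → ℝ} (hab : a ≠ b) (hu : ContDiff ℝ 1 u)
    (hg : EqOn (fun t : ℝ ↦ u (AffineMap.lineMap a b t)) g (Icc 0 1)) :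
    segmentEnergy a b u = (∫ s in (0 : ℝ)..1, deriv g s ^ 2) / ‖b - a‖ := by
  rw [segmentEnergy_eq_integral_deriv_sq hab hu,
    intervalIntegral.integral_congr_Ioo_of_le zero_le_one]
  intro s hs
  have hgerm := hg.eventuallyEq_of_mem (Icc_mem_nhds hs.1 hs.2)
  simp only [hgerm.deriv_eq]

end SegmentEnergy

section SmoothStep

/-- The primitive of the normalized bump function `b` on the line that vanishes on the left of the
support of `b`: a smooth step from `0` to `1`. -/
def bumpPrimitive {c : ℝ} (b : ContDiffBump c) (t : ℝ) : ℝ :=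
  ∫ s in (c - b.rOut)..t, b.normed volume s

variable {c : ℝ} (b : ContDiffBump c)

lemma hasDerivAt_bumpPrimitive (t : ℝ) :
    HasDerivAt (bumpPrimitive b) (b.normed volume t) t :=
  (b.continuous_normed.integral_hasStrictDerivAt _ t).hasDerivAt

lemma deriv_bumpPrimitive : deriv (bumpPrimitive b) = b.normed volume :=
  funext fun t ↦ (hasDerivAt_bumpPrimitive b t).deriv

lemma contDiff_bumpPrimitive : ContDiff ℝ ∞ (bumpPrimitive b) := by
  rw [contDiff_infty_iff_deriv, deriv_bumpPrimitive]
  exact ⟨fun t ↦ (hasDerivAt_bumpPrimitive b t).differentiableAt, b.contDiff_normed⟩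

lemma bumpPrimitive_eq_zero {t : ℝ} (ht : t ≤ c - b.rOut) : bumpPrimitive b t = 0 := by
  rw [bumpPrimitive, intervalIntegral.integral_symm, neg_eq_zero,
    intervalIntegral.integral_of_le ht]
  refine setIntegral_eq_zero_of_forall_eq_zero fun s hs ↦ Function.notMem_support.1 ?_
  rw [b.support_normed_eq, Real.ball_eq_Ioo]
  exact fun hs' ↦ hs'.1.not_ge hs.2

lemma bumpPrimitive_eq_one {t : ℝ} (ht : c + b.rOut ≤ t) : bumpPrimitive b t = 1 := by
  rw [bumpPrimitive, intervalIntegral.integral_eq_integral_of_support_subset, b.integral_normed]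
  rw [b.support_normed_eq, Real.ball_eq_Ioo]
  exact fun s hs ↦ ⟨hs.1, hs.2.le.trans ht⟩

lemma integral_deriv_bumpPrimitive_sq_le {x y : ℝ} (hxy : x ≤ y) :
    ∫ s in x..y, deriv (bumpPrimitive b) s ^ 2 ≤ 1 / (2 * b.rIn) := by
  have hcont : Continuous (b.normed volume) := b.continuous_normed
  have hsup (s : ℝ) : b.normed volume s ≤ 1 / (2 * b.rIn) := by
    simpa only [Real.volume_real_closedBall b.rIn_pos.le] using
      b.normed_le_div_measure_closedBall_rIn volume s
  have hmass : ∫ s in x..y, b.normed volume s ≤ 1 := by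
    rw [intervalIntegral.integral_of_le hxy, ← b.integral_normed (μ := volume)]
    exact setIntegral_le_integral b.integrable_normed (.of_forall b.nonneg_normed)
  rw [deriv_bumpPrimitive]
  calc ∫ s in x..y, b.normed volume s ^ 2
      ≤ ∫ s in x..y, 1 / (2 * b.rIn) * b.normed volume s := by
        refine intervalIntegral.integral_mono_on hxy ((hcont.pow 2).intervalIntegrable _ _)
          ((hcont.const_mul _).intervalIntegrable _ _) fun s _ ↦ ?_
        rw [sq]
        exact mul_le_mul_of_nonneg_right (hsup s) (b.nonneg_normed s)
    _ = 1 / (2 * b.rIn) * ∫ s in x..y, b.normed volume s :=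
        intervalIntegral.integral_const_mul _ _
    _ ≤ 1 / (2 * b.rIn) := mul_le_of_le_one_right (by have := b.rIn_pos; positivity) hmass

lemma exists_smooth_step_energy_le {C : ℝ} (hC : 1 < C) :
    ∃ φ : ℝ → ℝ, ContDiff ℝ ∞ φ ∧ (∀ᶠ t in 𝓝 0, φ t = 0) ∧ (∀ᶠ t in 𝓝 1, φ t = 1) ∧
      ∫ s in (0 : ℝ)..1, deriv φ s ^ 2 ≤ C := by
  obtain ⟨R, hinner, hR⟩ : ∃ R, 1 / (2 * C) < R ∧ R < 1 / 2 :=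
    exists_between (one_div_lt_one_div_of_lt two_pos (by linarith))
  let b : ContDiffBump (1 / 2 : ℝ) := ⟨1 / (2 * C), R, by positivity, hinner⟩
  refine ⟨bumpPrimitive b, contDiff_bumpPrimitive b, ?_, ?_, ?_⟩
  · filter_upwards [Iic_mem_nhds (show 0 < 1 / 2 - R by linarith)] with t ht
    exact bumpPrimitive_eq_zero b ht
  · filter_upwards [Ici_mem_nhds (show 1 / 2 + R < 1 by linarith)] with t ht
    exact bumpPrimitive_eq_one b ht
  · refine (integral_deriv_bumpPrimitive_sq_le b zero_le_one).trans_eq ?_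
    change 1 / (2 * (1 / (2 * C))) = C
    field_simp

end SmoothStep

section Gluing

lemma exists_contDiff_eqOn_of_eventuallyEq {ι E F : Type*} [Finite ι]
    [NormedAddCommGroup E] [NormedSpace ℝ E] [FiniteDimensional ℝ E]
    [NormedAddCommGroup F] [NormedSpace ℝ F] {n : ℕ∞} {K : ι → Set E} {f : ι → E → F}
    (hK : ∀ i, IsClosed (K i)) (hf : ∀ i, ContDiff ℝ n (f i))
    (hgerm : ∀ i j, ∀ x ∈ K i ∩ K j, f i =ᶠ[𝓝 x] f j) :
    ∃ u : E → F, ContDiff ℝ n u ∧ ∀ i, EqOn u (f i) (K i) := by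
  -- Each set of admissible values is convex, so a partition of unity can patch local solutions.
  let T (x : E) : Set F := {y | ∀ i, x ∈ K i → y = f i x}
  have hT (x : E) : Convex ℝ (T x) := by
    intro y hy z hz p q _ _ hpq i hi
    rw [hy i hi, hz i hi, ← add_smul, hpq, one_smul]
  have hlocal (x : E) : ∃ g : E → F, ContDiff ℝ n g ∧ ∀ᶠ y in 𝓝 x, g y ∈ T y := by
    obtain ⟨g, hg, hgx⟩ : ∃ g : E → F, ContDiff ℝ n g ∧ ∀ i, x ∈ K i → g =ᶠ[𝓝 x] f i := by
      by_cases hx : ∃ i, x ∈ K i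
      · obtain ⟨i, hi⟩ := hx
        exact ⟨f i, hf i, fun j hj ↦ hgerm i j x ⟨hi, hj⟩⟩
      · exact ⟨0, contDiff_const, fun i hi ↦ (hx ⟨i, hi⟩).elim⟩
    refine ⟨g, hg, eventually_all.2 fun i ↦ ?_⟩
    by_cases hi : x ∈ K i
    · exact (hgx i hi).mono fun y hy _ ↦ hy
    · exact ((hK i).isOpen_compl.eventually_mem hi).mono fun y hy hyK ↦ (hy hyK).elim
  obtain ⟨u, hu⟩ := exists_contMDiffMap_forall_mem_convex_of_local 𝓘(ℝ, E) hT fun x ↦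
    let ⟨g, hg, hgT⟩ := hlocal x
    ⟨_, hgT, g, hg.contMDiff.contMDiffOn, fun _ hy ↦ hy⟩
  exact ⟨u, u.contMDiff.contDiff, fun i x hx ↦ hu x i hx⟩

variable {E : Type*} [NormedAddCommGroup E] [InnerProductSpace ℝ E]

/-- The affine coordinate on `E` that is constant orthogonally to `b - a` and takes the values `0`
at `a` and `1` at `b`; it transports side profiles to smooth functions on the whole space. -/
def segmentCoord (a b x : E) : ℝ :=
  ⟪b - a, x - a⟫ / ‖b - a‖ ^ 2

lemma contDiff_segmentCoord {n : WithTop ℕ∞} (a b : E) : ContDiff ℝ n (segmentCoord a b) :=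
  (contDiff_const.inner ℝ (contDiff_id.sub contDiff_const)).div_const _

lemma segmentCoord_lineMap {a b : E} (hab : a ≠ b) (s : ℝ) :
    segmentCoord a b (AffineMap.lineMap a b s) = s := by
  have hlen : ‖b - a‖ ≠ 0 := norm_ne_zero_iff.2 (sub_ne_zero.2 hab.symm)
  rw [segmentCoord, AffineMap.lineMap_apply_module', add_sub_cancel_right, inner_smul_right,
    real_inner_self_eq_norm_sq, mul_div_cancel_right₀ _ (pow_ne_zero 2 hlen)]

lemma comp_segmentCoord_eventuallyEq {a b : E} (hab : a ≠ b) {F : Type*} {g : ℝ → F} {y : F}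
    {s : ℝ} (hg : ∀ᶠ t in 𝓝 s, g t = y) :
    ∀ᶠ x in 𝓝 (AffineMap.lineMap a b s), g (segmentCoord a b x) = y :=
  ((contDiff_segmentCoord (n := 0) a b).continuous.tendsto' _ _
    (segmentCoord_lineMap hab s)).eventually hg

end Gluing

section Polygon

variable {N n : ℕ} [NeZero n] {A : ZMod n → EuclideanSpace ℝ (Fin N)}

lemma IsPolygon.ne_succ (hA : IsPolygon A) (i : ZMod n) : A i ≠ A (i + 1) :=
  (hA.2.1 i).symm

lemma IsPolygon.eq_of_mem_segments (hA : IsPolygon A) {x : EuclideanSpace ℝ (Fin N)}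
    (hx : ∀ k, A k ≠ x) {i j : ZMod n} (hi : x ∈ segment ℝ (A i) (A (i + 1)))
    (hj : x ∈ segment ℝ (A j) (A (j + 1))) : i = j := by
  by_contra hij
  have hmem : x ∈ openSegment ℝ (A i) (A (i + 1)) ∩ openSegment ℝ (A j) (A (j + 1)) :=
    ⟨mem_openSegment_of_ne_left_right (hx i) (hx (i + 1)) hi,
      mem_openSegment_of_ne_left_right (hx j) (hx (j + 1)) hj⟩
  rwa [hA.2.2.1 i j hij] at hmem

lemma IsPolygon.exists_contDiff_extension (hA : IsPolygon A) {m : ℕ∞} {g : ZMod n → ℝ → ℝ}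
    {α : ZMod n → ℝ} (hg : ∀ i, ContDiff ℝ m (g i)) (hzero : ∀ i, ∀ᶠ t in 𝓝 0, g i t = α i)
    (hone : ∀ i, ∀ᶠ t in 𝓝 1, g i t = α (i + 1)) :
    ∃ u : EuclideanSpace ℝ (Fin N) → ℝ, ContDiff ℝ m u ∧
      ∀ i, EqOn (fun t : ℝ ↦ u (AffineMap.lineMap (A i) (A (i + 1)) t)) (g i) (Icc 0 1) := by
  let f (i : ZMod n) (x : EuclideanSpace ℝ (Fin N)) : ℝ := g i (segmentCoord (A i) (A (i + 1)) x)
  have hvertex {i k : ZMod n} (hk : A k ∈ segment ℝ (A i) (A (i + 1))) :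
      f i =ᶠ[𝓝 (A k)] fun _ ↦ α k := by
    rcases hA.2.2.2 k i hk with rfl | rfl
    · simpa only [f, EventuallyEq, AffineMap.lineMap_apply_zero] using
        comp_segmentCoord_eventuallyEq (hA.ne_succ i) (hzero i)
    · simpa only [f, EventuallyEq, AffineMap.lineMap_apply_one, sub_add_cancel] using
        comp_segmentCoord_eventuallyEq (hA.ne_succ (k - 1)) (hone (k - 1))
  have hgerm (i j : ZMod n) (x) (hx : x ∈ segment ℝ (A i) (A (i + 1)) ∩
      segment ℝ (A j) (A (j + 1))) : f i =ᶠ[𝓝 x] f j := by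
    by_cases hxA : ∃ k, A k = x
    · obtain ⟨k, rfl⟩ := hxA
      exact (hvertex hx.1).trans (hvertex hx.2).symm
    · rw [hA.eq_of_mem_segments (not_exists.1 hxA) hx.1 hx.2]
  obtain ⟨u, hu, huf⟩ := exists_contDiff_eqOn_of_eventuallyEq
    (fun i ↦ isClosed_segment (A i) (A (i + 1)))
    (fun i ↦ (hg i).comp (contDiff_segmentCoord _ _)) hgerm
  refine ⟨u, hu, fun i s hs ↦ ?_⟩
  have hmem : AffineMap.lineMap (A i) (A (i + 1)) s ∈ segment ℝ (A i) (A (i + 1)) := by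
    rw [segment_eq_image_lineMap]
    exact mem_image_of_mem _ hs
  simpa only [Function.comp_apply, segmentCoord_lineMap (hA.ne_succ i)] using huf i hmem

end Polygon

section CycleRayleighQuotient

lemma exists_isMinOn_compl_zero_of_smul_eq {V : Type*} [NormedAddCommGroup V] [NormedSpace ℝ V]
    [ProperSpace V] [Nontrivial V] {R : V → ℝ} (hcont : ContinuousOn R {0}ᶜ)
    (hsmul : ∀ c : ℝ, 0 < c → ∀ x, R (c • x) = R x) : ∃ x ∈ ({0}ᶜ : Set V), IsMinOn R {0}ᶜ x := by
  have hsphere : sphere (0 : V) 1 ⊆ {0}ᶜ := fun x hx ↦ ne_of_mem_sphere hx one_ne_zero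
  obtain ⟨x, hx, hmin⟩ := (isCompact_sphere (0 : V) 1).exists_isMinOn
    (NormedSpace.sphere_nonempty.2 zero_le_one) (hcont.mono hsphere)
  refine ⟨x, hsphere hx, fun y hy ↦ ?_⟩
  have hy' : 0 < ‖y‖⁻¹ := inv_pos.2 (norm_pos_iff.2 hy)
  have hmem : ‖y‖⁻¹ • y ∈ sphere (0 : V) 1 := by
    rw [mem_sphere_zero_iff_norm, norm_smul, norm_inv, norm_norm,
      inv_mul_cancel₀ (norm_ne_zero_iff.2 hy)]
  exact (hmin hmem).trans_eq (hsmul _ hy' y)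

/-- The space of functions on `ι` with sum zero, on which the discrete quotient is minimized. -/
def sumZeroSubmodule (ι : Type*) [Fintype ι] : Submodule ℝ (ι → ℝ) :=
  LinearMap.ker (∑ i, LinearMap.proj i)

lemma mem_sumZeroSubmodule {ι : Type*} [Fintype ι] {α : ι → ℝ} :
    α ∈ sumZeroSubmodule ι ↔ ∑ i, α i = 0 := by
  simp [sumZeroSubmodule]

lemma nontrivial_sumZeroSubmodule {ι : Type*} [Fintype ι] [Nontrivial ι] :
    Nontrivial (sumZeroSubmodule ι) := by
  classical
  obtain ⟨i, j, hij⟩ := exists_pair_ne ι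
  refine Submodule.nontrivial_iff_ne_bot.2 ((Submodule.ne_bot_iff _).2
    ⟨Pi.single i 1 - Pi.single j 1, mem_sumZeroSubmodule.2 ?_, fun h ↦ ?_⟩)
  · simp [Finset.sum_sub_distrib]
  · simpa [hij] using congrFun h i

variable {n : ℕ} [NeZero n]

/-- The quadratic form `Q` on `E`, expressed through `α` alone: `E` is the graph of
`α ↦ (αᵢ₊₁ - αᵢ)ᵢ`. -/
def cycleEnergy (ℓ α : ZMod n → ℝ) : ℝ :=
  ∑ i, (α (i + 1) - α i) ^ 2 / ℓ i

lemma continuous_cycleEnergy (ℓ : ZMod n → ℝ) : Continuous (cycleEnergy ℓ) := by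
  unfold cycleEnergy
  simp only [div_eq_mul_inv]
  fun_prop

lemma cycleEnergy_smul (ℓ : ZMod n → ℝ) (c : ℝ) (α : ZMod n → ℝ) :
    cycleEnergy ℓ (c • α) = c ^ 2 * cycleEnergy ℓ α := by
  simp only [cycleEnergy, Pi.smul_apply, smul_eq_mul, ← mul_sub, mul_pow, mul_div_assoc,
    Finset.mul_sum]

/-- The Rayleigh quotients of the quadratic form `cycleEnergy ℓ` on the nonzero `α` with sum
zero. -/
def cycleRayleighQuotients (ℓ : ZMod n → ℝ) : Set ℝ :=
  (fun α ↦ cycleEnergy ℓ α / ∑ i, α i ^ 2) '' {α | α ≠ 0 ∧ ∑ i, α i = 0}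

lemma sum_sq_ne_zero_iff {ι : Type*} [Fintype ι] {α : ι → ℝ} : ∑ i, α i ^ 2 ≠ 0 ↔ α ≠ 0 := by
  simp [Finset.sum_eq_zero_iff_of_nonneg, sq_nonneg, funext_iff]

lemma setOf_edge_rayleigh_eq_cycleRayleighQuotients (ℓ : ZMod n → ℝ) :
    {r : ℝ | ∃ α β : ZMod n → ℝ, (∀ i, α i + β i = α (i + 1)) ∧ (α ≠ 0 ∨ β ≠ 0) ∧
      (∑ i, α i) = 0 ∧ r = (∑ i, β i ^ 2 / ℓ i) / (∑ i, α i ^ 2)} =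
      cycleRayleighQuotients ℓ := by
  ext r
  constructor
  · rintro ⟨α, β, hE, hne, hsum, rfl⟩
    obtain rfl : β = fun i ↦ α (i + 1) - α i := funext fun i ↦ eq_sub_of_add_eq' (hE i)
    refine ⟨α, ⟨?_, hsum⟩, rfl⟩
    rintro rfl
    exact hne.elim (· rfl) (· (by ext; simp))
  · rintro ⟨α, ⟨hα, hsum⟩, rfl⟩
    exact ⟨α, fun i ↦ α (i + 1) - α i, fun i ↦ add_sub_cancel _ _, .inl hα, hsum, rfl⟩

lemma exists_isLeast_cycleRayleighQuotients [Nontrivial (ZMod n)] (ℓ : ZMod n → ℝ) :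
    ∃ m, IsLeast (cycleRayleighQuotients ℓ) m := by
  let R (α : sumZeroSubmodule (ZMod n)) : ℝ := cycleEnergy ℓ α / ∑ i, (α : ZMod n → ℝ) i ^ 2
  have hcont : ContinuousOn R {0}ᶜ := by
    have hsq : Continuous fun α : ZMod n → ℝ ↦ ∑ i, α i ^ 2 := by fun_prop
    exact ((continuous_cycleEnergy ℓ).comp continuous_subtype_val).continuousOn.div
      (hsq.comp continuous_subtype_val).continuousOn
      fun α hα ↦ sum_sq_ne_zero_iff.2 (Subtype.coe_ne_coe.2 hα)
  have hsmul (c : ℝ) (hc : 0 < c) (α : sumZeroSubmodule (ZMod n)) : R (c • α) = R α := by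
    simp only [R, Submodule.coe_smul, cycleEnergy_smul, Pi.smul_apply, smul_eq_mul, mul_pow,
      ← Finset.mul_sum]
    exact mul_div_mul_left _ _ (pow_ne_zero 2 hc.ne')
  have := nontrivial_sumZeroSubmodule (ι := ZMod n)
  obtain ⟨α₀, hα₀, hmin⟩ := exists_isMinOn_compl_zero_of_smul_eq hcont hsmul
  refine ⟨R α₀, ⟨α₀, ⟨Subtype.coe_ne_coe.2 hα₀, mem_sumZeroSubmodule.1 α₀.2⟩, rfl⟩, ?_⟩
  rintro _ ⟨α, ⟨hα, hsum⟩, rfl⟩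
  exact hmin (a := ⟨α, mem_sumZeroSubmodule.2 hsum⟩) fun h ↦ hα (congrArg Subtype.val h)

lemma nonneg_of_mem_cycleRayleighQuotients {ℓ : ZMod n → ℝ} (hℓ : ∀ i, 0 ≤ ℓ i) {r : ℝ}
    (hr : r ∈ cycleRayleighQuotients ℓ) : 0 ≤ r := by
  obtain ⟨α, -, rfl⟩ := hr
  exact div_nonneg (Finset.sum_nonneg fun i _ ↦ div_nonneg (sq_nonneg _) (hℓ i))
    (Finset.sum_nonneg fun i _ ↦ sq_nonneg _)

end CycleRayleighQuotient

section PolygonEnergy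

variable {N n : ℕ} [NeZero n] {A : ZMod n → EuclideanSpace ℝ (Fin N)}

/-- The tangential Dirichlet energy of `u` on the polygon with vertices `A`: the numerator of the
quotients defining `polyLambda1`. -/
def polyEnergy (A : ZMod n → EuclideanSpace ℝ (Fin N)) (u : EuclideanSpace ℝ (Fin N) → ℝ) : ℝ :=
  ∑ i, segmentEnergy (A i) (A (i + 1)) u

/-- The Rayleigh quotients of smooth functions whose infimum is `polyLambda1 A`. -/
def polyRayleighQuotients (A : ZMod n → EuclideanSpace ℝ (Fin N)) : Set ℝ :=
  {r : ℝ | ∃ u : EuclideanSpace ℝ (Fin N) → ℝ, ContDiff ℝ ∞ u ∧ (∑ i, u (A i)) = 0 ∧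
    (∑ i, u (A i) ^ 2) ≠ 0 ∧ r = polyEnergy A u / ∑ i, u (A i) ^ 2}

lemma polyLambda1_eq_sInf (A : ZMod n → EuclideanSpace ℝ (Fin N)) :
    polyLambda1 A = sInf (polyRayleighQuotients A) :=
  rfl

lemma cycleEnergy_le_polyEnergy (hne : ∀ i, A i ≠ A (i + 1)) {u : EuclideanSpace ℝ (Fin N) → ℝ}
    (hu : ContDiff ℝ 1 u) : cycleEnergy (polyLen A) (fun i ↦ u (A i)) ≤ polyEnergy A u :=
  Finset.sum_le_sum fun i _ ↦ sq_sub_div_norm_le_segmentEnergy (hne i) hu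

lemma IsPolygon.exists_contDiff_polyEnergy_le (hA : IsPolygon A) (α : ZMod n → ℝ) {C : ℝ}
    (hC : 1 < C) : ∃ u : EuclideanSpace ℝ (Fin N) → ℝ, ContDiff ℝ ∞ u ∧ (∀ i, u (A i) = α i) ∧
      polyEnergy A u ≤ cycleEnergy (polyLen A) α * C := by
  obtain ⟨φ, hφ, hzero, hone, henergy⟩ := exists_smooth_step_energy_le hC
  let g (i : ZMod n) (t : ℝ) : ℝ := α i + (α (i + 1) - α i) * φ t
  have hg (i : ZMod n) : ContDiff ℝ ∞ (g i) := contDiff_const.add (contDiff_const.mul hφ)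
  have hderiv (i : ZMod n) (s : ℝ) : deriv (g i) s = (α (i + 1) - α i) * deriv φ s := by
    simp only [g, deriv_const_add, deriv_const_mul_field]
  obtain ⟨u, hu, hug⟩ := hA.exists_contDiff_extension hg
    (fun i ↦ hzero.mono fun t ht ↦ by simp only [g, ht]; ring)
    (fun i ↦ hone.mono fun t ht ↦ by simp only [g, ht]; ring)
  refine ⟨u, hu, fun i ↦ ?_, ?_⟩
  · simpa [g, hzero.self_of_nhds] using hug i (left_mem_Icc.2 zero_le_one)
  rw [polyEnergy, cycleEnergy, Finset.sum_mul]
  refine Finset.sum_le_sum fun i _ ↦ ?_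
  calc segmentEnergy (A i) (A (i + 1)) u
      = (∫ s in (0 : ℝ)..1, deriv (g i) s ^ 2) / polyLen A i :=
        segmentEnergy_eq_of_eqOn (hA.ne_succ i) (hu.of_le (by simp)) (hug i)
    _ = (α (i + 1) - α i) ^ 2 / polyLen A i * ∫ s in (0 : ℝ)..1, deriv φ s ^ 2 := by
        simp only [hderiv, mul_pow, intervalIntegral.integral_const_mul]
        ring
    _ ≤ (α (i + 1) - α i) ^ 2 / polyLen A i * C :=
        mul_le_mul_of_nonneg_left henergy (div_nonneg (sq_nonneg _) (norm_nonneg _))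

lemma exists_mem_cycleRayleighQuotients_le (hne : ∀ i, A i ≠ A (i + 1)) {r : ℝ}
    (hr : r ∈ polyRayleighQuotients A) : ∃ q ∈ cycleRayleighQuotients (polyLen A), q ≤ r := by
  obtain ⟨u, hu, hsum, hsq, rfl⟩ := hr
  refine ⟨_, ⟨fun i ↦ u (A i), ⟨sum_sq_ne_zero_iff.1 hsq, hsum⟩, rfl⟩, ?_⟩
  dsimp only
  gcongr
  exact cycleEnergy_le_polyEnergy hne (hu.of_le (by simp))

lemma IsPolygon.exists_mem_polyRayleighQuotients_le (hA : IsPolygon A) {q : ℝ}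
    (hq : q ∈ cycleRayleighQuotients (polyLen A)) {C : ℝ} (hC : 1 < C) :
    ∃ r ∈ polyRayleighQuotients A, r ≤ q * C := by
  obtain ⟨α, ⟨hα, hsum⟩, rfl⟩ := hq
  obtain ⟨u, hu, huA, henergy⟩ := hA.exists_contDiff_polyEnergy_le α hC
  refine ⟨_, ⟨u, hu, by simpa only [huA] using hsum,
    by simpa only [huA] using sum_sq_ne_zero_iff.2 hα, rfl⟩, ?_⟩
  simp only [huA, div_mul_eq_mul_div]
  gcongr

lemma IsPolygon.isGLB_polyRayleighQuotients (hA : IsPolygon A) {m : ℝ}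
    (hm : IsLeast (cycleRayleighQuotients (polyLen A)) m) : IsGLB (polyRayleighQuotients A) m := by
  refine ⟨fun r hr ↦ ?_, fun c hc ↦ ?_⟩
  · obtain ⟨q, hq, hqr⟩ := exists_mem_cycleRayleighQuotients_le hA.ne_succ hr
    exact (hm.2 hq).trans hqr
  · have hm₀ : 0 ≤ m := nonneg_of_mem_cycleRayleighQuotients (fun _ ↦ norm_nonneg _) hm.1
    refine (le_iff_forall_one_lt_le_mul₀ hm₀).2 fun C hC ↦ ?_
    obtain ⟨r, hr, hrC⟩ := hA.exists_mem_polyRayleighQuotients_le hm.1 hC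
    exact (hc hr).trans hrC

end PolygonEnergy

/-- **`λ₁ᴬ` as a finite-dimensional eigenvalue**: `λ₁ᴬ` is the minimum of
`Q(α, β) / ∑ᵢ αᵢ²` over nonzero `(α, β) ∈ E` (i.e. `αᵢ + βᵢ = αᵢ₊₁` cyclically) with
`∑ᵢ αᵢ = 0`, where `Q(α, β) = ∑ᵢ βᵢ²/ℓᵢ`. -/
theorem polyLambda1_eq_min_quadratic_form {N n : ℕ} [NeZero n]
    (A : ZMod n → EuclideanSpace ℝ (Fin N)) (hA : IsPolygon A) :
    IsLeast
      { r : ℝ | ∃ α β : ZMod n → ℝ,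
          (∀ i, α i + β i = α (i + 1)) ∧ (α ≠ 0 ∨ β ≠ 0) ∧ (∑ i, α i) = 0 ∧
          r = (∑ i, β i ^ 2 / polyLen A i) / (∑ i, α i ^ 2) }
      (polyLambda1 A) := by
  have : Fact (1 < n) := ⟨one_lt_two.trans hA.1⟩
  rw [setOf_edge_rayleigh_eq_cycleRayleighQuotients]
  obtain ⟨m, hm⟩ := exists_isLeast_cycleRayleighQuotients (polyLen A)
  obtain ⟨r, hr, -⟩ := hA.exists_mem_polyRayleighQuotients_le hm.1 one_lt_two
  rwa [polyLambda1_eq_sInf, (hA.isGLB_polyRayleighQuotients hm).csInf_eq ⟨r, hr⟩]
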